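/- arXiv:1603.00742 — 2 statements merged into one kernel-verified Lean document; each statement's English description precedes it below -/
import Mathlib

section
/- Fix d >= 1. Let (mu, t) and (mu', t') be pairs consisting of a bipartition and an integer. Write tau_{2d}(mu^1, t) = (_, s), tau_{2d}(mu^2, d-1-t) = (_, r), tau_{2d}(mu'^1, t') = (_, s'), tau_{2d}(mu'^2, d-1-t') = (_, r') with s, r, s', r' ∈ Z^{2d}. Then (mu, t) and (mu', t') are connected by a finite sequence of d-cohook removals and d-cohook additions if and only if s + r = s' + r' in Z^{2d}. -/
/-!
Both beta-sets of a charged bipartition are placed on two copies of `ℤ`. Removing a `d`-cohook then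
moves one bead along the map `(x, X) ↦ (x, Y) ↦ (x - 2d, X)` to a free place
(`removeCohook_iff`). The orbits of this map are the residue classes modulo `2d`, each orbit
interleaving one runner of `X` with the runner of `Y` of the same index into a single line on which
beads move by one place.

Adding or deleting a bead of a beta-set changes the charge by one (`exists_insert`,
`exists_remove`), and a beta-set determines its charge (`betaSet_inj`). A bead move takes a bead off
one runner and puts it on the runner of the same index in the other copy, so it preserves `s + r`
(`HasTotal.step`).

Conversely, a bead can be carried to any free place of its orbit, because a bead standing in the way
can be sent to the target and replaced (`jump`). If two charged bipartitions have the same `s + r`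
and a bead of the first is missing from the second, then the same residue class contains a bead of
the second missing from the first (`exists_partner`): inclusions of beta-sets weakly increase the
charge, with equality only for equal sets. Carrying the former bead to the place of the latter
lowers the finite number of beads of the first configuration missing from the second, and when none
is left the two coincide (`connected_of_total`).
-/

/-- A partition, encoded as an antitone, eventually-zero sequence of naturals;
`f i` is the part `λ_{i+1}` (so indexing is shifted by one). -/
def IsPartition (f : ℕ → ℕ) : Prop :=
  Antitone f ∧ ∃ N, ∀ i, N ≤ i → f i = 0

/-- The beta-set `β_d(λ) = {λ_u + d + 1 - u : u ≥ 1}` of the charged partition `(λ, d)`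
(with `u = i + 1`). -/
def betaSet (f : ℕ → ℕ) (d : ℤ) : Set ℤ :=
  {x | ∃ i : ℕ, x = (f i : ℤ) + d - i}

/-- The size `|λ| = ∑ λ_u`. -/
noncomputable def psize (f : ℕ → ℕ) : ℕ := ∑' i, f i

/-- Lusztig's `a`-function, `a(λ) = ∑_{u ≥ 1} (u - 1) λ_u`. -/
noncomputable def aFun (f : ℕ → ℕ) : ℕ := ∑' i, i * f i

/-- The type of partitions. -/
abbrev PartitionT := {f : ℕ → ℕ // IsPartition f}

/-- `AddHook e lam nu d x` : the charged partition `(nu, d)` is obtained from `(lam, d)`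
by adding the `e`-hook `(x, x + e)`. -/
def AddHook (e : ℤ) (lam nu : ℕ → ℕ) (d : ℤ) (x : ℤ) : Prop :=
  x ∈ betaSet lam d ∧ x + e ∉ betaSet lam d ∧
    betaSet nu d = (betaSet lam d \ {x}) ∪ {x + e}

/-- `TauCharge l f c s` : `s ∈ ℤ^l` is the charge component of `τ_l(f, c)`, i.e. there is an
`l`-tuple of partitions `ν` with `β_c(f) = ⊔_{p=1}^{l} (p - l + l·β_{s_p}(ν^p))`. -/
def TauCharge (l : ℕ) (f : ℕ → ℕ) (c : ℤ) (s : Fin l → ℤ) : Prop :=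
  ∃ ν : Fin l → (ℕ → ℕ), (∀ p, IsPartition (ν p)) ∧
    betaSet f c =
      ⋃ p : Fin l, (fun b => ((p : ℕ) : ℤ) + 1 - (l : ℤ) + (l : ℤ) * b) '' betaSet (ν p) (s p)

/-- `lam` is an `e`-core: `(lam, 0)` has no `e`-hook. -/
def IsECore (e : ℕ) (f : ℕ → ℕ) : Prop :=
  ¬ ∃ x : ℤ, x + (e : ℤ) ∈ betaSet f 0 ∧ x ∉ betaSet f 0

/-- `(n1, n2, t')` is obtained from the charged bipartition `(m1, m2, t)` by removing a
`d`-cohook, where `X = β_t(m1)` and `Y = β_{d-1-t}(m2)`. -/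
def RemoveCohook (d : ℕ) (m1 m2 : ℕ → ℕ) (t : ℤ) (n1 n2 : ℕ → ℕ) (t' : ℤ) : Prop :=
  (∃ x : ℤ, x ∈ betaSet m1 t ∧ x ∉ betaSet m2 ((d : ℤ) - 1 - t) ∧ t' = t - 1 ∧
      betaSet n1 t' = betaSet m1 t \ {x} ∧
      betaSet n2 ((d : ℤ) - 1 - t') = betaSet m2 ((d : ℤ) - 1 - t) ∪ {x}) ∨
  (∃ y : ℤ, y ∈ betaSet m2 ((d : ℤ) - 1 - t) ∧ y - 2 * (d : ℤ) ∉ betaSet m1 t ∧ t' = t + 1 ∧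
      betaSet n1 t' = betaSet m1 t ∪ {y - 2 * (d : ℤ)} ∧
      betaSet n2 ((d : ℤ) - 1 - t') = betaSet m2 ((d : ℤ) - 1 - t) \ {y})

/-- One step: a `d`-cohook removal or a `d`-cohook addition between charged bipartitions. -/
def CohookStep (d : ℕ) (a b : (PartitionT × PartitionT) × ℤ) : Prop :=
  RemoveCohook d a.1.1.1 a.1.2.1 a.2 b.1.1.1 b.1.2.1 b.2 ∨
    RemoveCohook d b.1.1.1 b.1.2.1 b.2 a.1.1.1 a.1.2.1 a.2

/-- Connectedness by a finite sequence of `d`-cohook removals and additions. -/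
def CohookConnected (d : ℕ) : ((PartitionT × PartitionT) × ℤ) →
    ((PartitionT × PartitionT) × ℤ) → Prop :=
  Relation.ReflTransGen (CohookStep d)

/-! ### Beta-sets of charged partitions -/

lemma betaSet_eq_range (f : ℕ → ℕ) (c : ℤ) :
    betaSet f c = Set.range (fun i : ℕ => (f i : ℤ) + c - i) := by
  ext x
  simp [betaSet, eq_comm]

lemma strictAnti_beta {f : ℕ → ℕ} (hf : IsPartition f) (c : ℤ) :
    StrictAnti (fun i : ℕ => (f i : ℤ) + c - i) := by
  intro i j hij
  have := hf.1 hij.le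
  simp only
  omega

/-- A beta-set determines both the partition and the charge. -/
lemma betaSet_inj {f g : ℕ → ℕ} (hf : IsPartition f) (hg : IsPartition g) {c c' : ℤ}
    (h : betaSet f c = betaSet g c') : f = g ∧ c = c' := by
  rw [betaSet_eq_range, betaSet_eq_range] at h
  have key : (fun i : ℕ => (f i : ℤ) + c - i) = fun i : ℕ => (g i : ℤ) + c' - i := by
    have h1 : StrictMono (fun i : ℕ => -((f i : ℤ) + c - i)) := (strictAnti_beta hf c).neg
    have h2 : StrictMono (fun i : ℕ => -((g i : ℤ) + c' - i)) := (strictAnti_beta hg c').neg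
    have h3 : Set.range (fun i : ℕ => -((f i : ℤ) + c - i))
        = Set.range (fun i : ℕ => -((g i : ℤ) + c' - i)) := by
      have := congrArg (fun S => Neg.neg '' S) h
      simpa only [← Set.range_comp, Function.comp_def] using this
    have h4 := (StrictMono.range_inj h1 h2).1 h3
    funext i
    have := congrFun h4 i
    omega
  obtain ⟨N, hN⟩ := hf.2
  obtain ⟨M, hM⟩ := hg.2
  have hc : c = c' := by
    have := congrFun key (max N M)
    rw [hN _ (le_max_left _ _), hM _ (le_max_right _ _)] at this
    omega
  refine ⟨?_, hc⟩
  funext i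
  have := congrFun key i
  omega

/-- Deleting a bead from a beta-set lowers the charge by one: the parts before the deleted one
grow by one, and the parts after it move up. -/
lemma exists_remove {f : ℕ → ℕ} (hf : IsPartition f) {c x : ℤ} (hx : x ∈ betaSet f c) :
    ∃ g, IsPartition g ∧ betaSet g (c - 1) = betaSet f c \ {x} := by
  obtain ⟨i, rfl⟩ := hx
  obtain ⟨hanti, N, hN⟩ := hf
  refine ⟨fun j => if j < i then f j + 1 else f (j + 1), ⟨?_, N + i, ?_⟩, ?_⟩
  · refine antitone_nat_of_succ_le fun n => ?_
    have h1 := hanti (Nat.le_succ n)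
    have h2 := hanti (Nat.le_succ (n + 1))
    simp only [Nat.succ_eq_add_one] at *
    split_ifs <;> omega
  · intro j hj
    simp only
    rw [if_neg (by omega), hN _ (by omega)]
  · ext y
    constructor
    · rintro ⟨j, rfl⟩
      by_cases hj : j < i
      · have := hanti hj.le
        refine ⟨⟨j, by simp [hj]⟩, ?_⟩
        simp [hj]
        omega
      · have := hanti (show i ≤ j + 1 by omega)
        refine ⟨⟨j + 1, by simp [hj]; ring⟩, ?_⟩
        simp [hj]
        omega
    · rintro ⟨⟨j, rfl⟩, hne⟩
      rcases lt_trichotomy j i with hj | rfl | hj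
      · exact ⟨j, by simp [hj]⟩
      · simp at hne
      · obtain ⟨k, rfl⟩ : ∃ k, j = k + 1 := ⟨j - 1, by omega⟩
        exact ⟨k, by simp [show ¬ k < i by omega]; ring⟩

/-- Adding a bead to a beta-set raises the charge by one. -/
lemma exists_insert {f : ℕ → ℕ} (hf : IsPartition f) {c x : ℤ} (hx : x ∉ betaSet f c) :
    ∃ g, IsPartition g ∧ betaSet g (c + 1) = insert x (betaSet f c) := by
  classical
  obtain ⟨hanti, N, hN⟩ := hf
  have hne : ∀ j : ℕ, x ≠ (f j : ℤ) + c - j := fun j h => hx ⟨j, h⟩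
  have hex : ∃ i : ℕ, (f i : ℤ) + c - i < x :=
    ⟨N + (c - x).toNat + 1, by rw [hN _ (by omega)]; push_cast; omega⟩
  -- `i` is the position at which the new bead enters the decreasing enumeration
  obtain ⟨i, hi, hmin⟩ : ∃ i : ℕ, (f i : ℤ) + c - i < x ∧
      ∀ j < i, x < (f j : ℤ) + c - j := by
    refine ⟨Nat.find hex, Nat.find_spec hex, fun j hj => ?_⟩
    have := Nat.find_min hex hj
    have := hne j
    omega
  have hpos : ∀ j < i, 1 ≤ f j := by
    intro j hj
    by_contra h0
    have h1 := hmin j hj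
    have h2 := hanti (show j ≤ (c - x).toNat by omega)
    have := hne (c - x).toNat
    omega
  have hlow : ∀ j, i ≤ j → (f j : ℤ) + c - j < x := by
    intro j hj
    have := hanti hj
    omega
  refine ⟨fun j => if j < i then f j - 1 else if j = i then (x - c - 1 + i).toNat else f (j - 1),
    ⟨?_, N + i + 1, ?_⟩, ?_⟩
  · refine antitone_nat_of_succ_le fun n => ?_
    have h1 := hanti (Nat.le_succ n)
    have h2 := hanti (Nat.sub_le n 1)
    simp only [Nat.succ_eq_add_one, Nat.add_sub_cancel] at *
    rcases lt_trichotomy (n + 1) i with h | h | h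
    · rw [if_pos h, if_pos (by omega)]
      omega
    · have := hmin n (by omega)
      rw [if_neg (by omega), if_pos h, if_pos (by omega)]
      omega
    · rw [if_neg (by omega), if_neg (by omega), if_neg (by omega)]
      split_ifs with h3
      · subst h3
        omega
      · exact h2
  · intro j hj
    simp only
    rw [if_neg (by omega), if_neg (by omega), hN _ (by omega)]
  · ext y
    constructor
    · rintro ⟨j, rfl⟩
      rcases lt_trichotomy j i with h | rfl | h
      · right
        have := hpos j h
        exact ⟨j, by simp only [if_pos h]; omega⟩
      · left
        simp only [lt_irrefl, if_false, if_true]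
        omega
      · right
        refine ⟨j - 1, ?_⟩
        simp only [if_neg (show ¬ j < i by omega), if_neg (show ¬ j = i by omega)]
        omega
    · rintro (rfl | ⟨j, rfl⟩)
      · refine ⟨i, ?_⟩
        simp only [lt_irrefl, if_false, if_true]
        omega
      · by_cases h : j < i
        · have := hpos j h
          exact ⟨j, by simp only [if_pos h]; omega⟩
        · refine ⟨j + 1, ?_⟩
          simp only [if_neg (show ¬ j + 1 < i by omega), if_neg (show ¬ j + 1 = i by omega)]
          rw [Nat.add_sub_cancel]
          push_cast
          ring

lemma charge_le_of_subset {f g : ℕ → ℕ} (hf : IsPartition f) (hg : IsPartition g) {c c' : ℤ}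
    (h : betaSet f c ⊆ betaSet g c') : c ≤ c' := by
  have hex : ∀ i : ℕ, ∃ j : ℕ, (f i : ℤ) + c - i = (g j : ℤ) + c' - j := fun i => h ⟨i, rfl⟩
  choose φ hφ using hex
  have hmono : StrictMono φ := by
    intro i j hij
    have h1 := strictAnti_beta hf c hij
    simp only [hφ] at h1
    exact (strictAnti_beta hg c').lt_iff_gt.1 h1
  obtain ⟨N, hN⟩ := hf.2
  obtain ⟨M, hM⟩ := hg.2
  have h1 := hmono.le_apply (x := max N M)
  have h2 := hφ (max N M)
  rw [hN _ (le_max_left _ _), hM _ ((le_max_right _ _).trans h1)] at h2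
  omega

/-- An inclusion of beta-sets of the same charge is an equality, since deleting a bead of the
larger set would leave a set of smaller charge. -/
lemma betaSet_eq_of_subset {f g : ℕ → ℕ} (hf : IsPartition f) (hg : IsPartition g) {c : ℤ}
    (h : betaSet f c ⊆ betaSet g c) : betaSet f c = betaSet g c := by
  refine h.antisymm fun x hx => ?_
  by_contra hxf
  obtain ⟨g', hg', he⟩ := exists_remove hg hx
  have : betaSet f c ⊆ betaSet g' (c - 1) := by
    rw [he]
    exact fun y hy => ⟨h hy, fun hyx => hxf (hyx ▸ hy)⟩
  have := charge_le_of_subset hf hg' this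
  omega

lemma finite_diff {f g : ℕ → ℕ} (hf : IsPartition f) (hg : IsPartition g) (c c' : ℤ) :
    (betaSet f c \ betaSet g c').Finite := by
  obtain ⟨N, hN⟩ := hg.2
  refine (Set.finite_Icc (c' - N) (f 0 + c)).subset ?_
  rintro x ⟨⟨i, rfl⟩, hx⟩
  have h0 := hf.1 (Nat.zero_le i)
  refine ⟨?_, by omega⟩
  by_contra hlt
  refine hx ⟨(c' - (f i + c - i)).toNat, ?_⟩
  rw [hN _ (by omega)]
  omega

/-! ### Runners and the charge vector -/

/-- The runner of `S` of index `p` on the `l`-abacus: the `b` with `p + 1 - l + l b ∈ S`. -/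
def runner (l : ℕ) (p : Fin l) (S : Set ℤ) : Set ℤ :=
  {b | ((p : ℕ) : ℤ) + 1 - (l : ℤ) + (l : ℤ) * b ∈ S}

lemma slot_inj {l : ℕ} {p q : Fin l} {b b' : ℤ}
    (h : ((p : ℕ) : ℤ) + 1 - (l : ℤ) + (l : ℤ) * b = ((q : ℕ) : ℤ) + 1 - (l : ℤ) + (l : ℤ) * b') :
    p = q ∧ b = b' := by
  have hp : ((p : ℕ) : ℤ) < l := by exact_mod_cast p.2
  have hq : ((q : ℕ) : ℤ) < l := by exact_mod_cast q.2
  have hl : (0 : ℤ) < l := by omega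
  have hbb : b = b' := by
    have h1 : (l : ℤ) * (b - b') = (q : ℕ) - (p : ℕ) := by linarith
    by_contra hne
    rcases lt_or_gt_of_ne hne with h2 | h2
    · nlinarith
    · nlinarith
  subst hbb
  exact ⟨Fin.ext (by omega), rfl⟩

lemma exists_slot {l : ℕ} (hl : 0 < l) (x : ℤ) :
    ∃ (p : Fin l) (b : ℤ), x = ((p : ℕ) : ℤ) + 1 - (l : ℤ) + (l : ℤ) * b := by
  have hl' : (0 : ℤ) < l := by exact_mod_cast hl
  have h1 := Int.emod_nonneg (x - 1) hl'.ne'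
  have h2 := Int.emod_lt_of_pos (x - 1) hl'
  have h3 := Int.emod_add_mul_ediv (x - 1) l
  refine ⟨⟨((x - 1) % l).toNat, by omega⟩, (x - 1) / l + 1, ?_⟩
  simp only [Int.toNat_of_nonneg h1]
  linarith

/-- The charge vector records the charges of the runners, each of which is a beta-set. -/
lemma tauCharge_iff {l : ℕ} (hl : 0 < l) {f : ℕ → ℕ} {c : ℤ} {s : Fin l → ℤ} :
    TauCharge l f c s ↔
      ∀ p, ∃ ν, IsPartition ν ∧ runner l p (betaSet f c) = betaSet ν (s p) := by
  constructor
  · rintro ⟨ν, hν, h⟩ p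
    refine ⟨ν p, hν p, ?_⟩
    ext b
    simp only [runner, Set.mem_ofPred_eq, h, Set.mem_iUnion, Set.mem_image]
    constructor
    · rintro ⟨q, b', hb', he⟩
      obtain ⟨rfl, rfl⟩ := slot_inj he
      exact hb'
    · exact fun hb => ⟨p, b, hb, rfl⟩
  · intro h
    choose ν hν h using h
    refine ⟨ν, hν, ?_⟩
    ext x
    obtain ⟨p, b, rfl⟩ := exists_slot hl x
    simp only [Set.mem_iUnion, Set.mem_image]
    constructor
    · intro hx
      exact ⟨p, b, h p ▸ hx, rfl⟩
    · rintro ⟨q, b', hb', he⟩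
      obtain ⟨rfl, rfl⟩ := slot_inj he
      rw [← h] at hb'
      exact hb'

lemma tauCharge_unique {l : ℕ} (hl : 0 < l) {f : ℕ → ℕ} {c : ℤ} {s s' : Fin l → ℤ}
    (h : TauCharge l f c s) (h' : TauCharge l f c s') : s = s' := by
  funext p
  obtain ⟨ν, hν, h⟩ := (tauCharge_iff hl).1 h p
  obtain ⟨ν', hν', h'⟩ := (tauCharge_iff hl).1 h' p
  exact (betaSet_inj hν hν' (h.symm.trans h')).2

lemma tauCharge_remove {l : ℕ} (hl : 0 < l) {f g : ℕ → ℕ} {c c' : ℤ} {s : Fin l → ℤ}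
    (h : TauCharge l f c s) (p : Fin l) (b : ℤ)
    (hx : ((p : ℕ) : ℤ) + 1 - (l : ℤ) + (l : ℤ) * b ∈ betaSet f c)
    (hg : betaSet g c' = betaSet f c \ {((p : ℕ) : ℤ) + 1 - (l : ℤ) + (l : ℤ) * b}) :
    TauCharge l g c' (s - Pi.single p 1) := by
  rw [tauCharge_iff hl] at h ⊢
  intro q
  obtain ⟨ν, hν, hr⟩ := h q
  by_cases hq : q = p
  · subst hq
    have hb : b ∈ betaSet ν (s q) := hr ▸ hx
    obtain ⟨ν', hν', he⟩ := exists_remove hν hb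
    refine ⟨ν', hν', ?_⟩
    simp only [Pi.sub_apply, Pi.single_eq_same, he, ← hr, hg]
    ext b'
    simp only [runner, Set.mem_ofPred_eq, Set.mem_sdiff, Set.mem_singleton_iff]
    refine and_congr_right fun _ => not_congr ⟨fun h => (slot_inj h).2, fun h => h ▸ rfl⟩
  · refine ⟨ν, hν, ?_⟩
    simp only [Pi.sub_apply, Pi.single_eq_of_ne hq, sub_zero, ← hr, hg]
    ext b'
    simp only [runner, Set.mem_ofPred_eq, Set.mem_sdiff, Set.mem_singleton_iff]
    exact and_iff_left fun h => hq (slot_inj h).1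

lemma tauCharge_insert {l : ℕ} (hl : 0 < l) {f g : ℕ → ℕ} {c c' : ℤ} {s : Fin l → ℤ}
    (h : TauCharge l f c s) (p : Fin l) (b : ℤ)
    (hx : ((p : ℕ) : ℤ) + 1 - (l : ℤ) + (l : ℤ) * b ∉ betaSet f c)
    (hg : betaSet g c' = insert (((p : ℕ) : ℤ) + 1 - (l : ℤ) + (l : ℤ) * b) (betaSet f c)) :
    TauCharge l g c' (s + Pi.single p 1) := by
  rw [tauCharge_iff hl] at h ⊢
  intro q
  obtain ⟨ν, hν, hr⟩ := h q
  by_cases hq : q = p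
  · subst hq
    have hb : b ∉ betaSet ν (s q) := hr ▸ hx
    obtain ⟨ν', hν', he⟩ := exists_insert hν hb
    refine ⟨ν', hν', ?_⟩
    simp only [Pi.add_apply, Pi.single_eq_same, he, ← hr, hg]
    ext b'
    simp only [runner, Set.mem_ofPred_eq, Set.mem_insert_iff]
    refine or_congr_left ⟨fun h => (slot_inj h).2, fun h => h ▸ rfl⟩
  · refine ⟨ν, hν, ?_⟩
    simp only [Pi.add_apply, Pi.single_eq_of_ne hq, add_zero, ← hr, hg]
    ext b'
    simp only [runner, Set.mem_ofPred_eq, Set.mem_insert_iff]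
    exact or_iff_right fun h => hq (slot_inj h).1

/-! ### Bead moves along a map -/

section Moves

variable {α : Type*}

/-- One bead of `W` is moved from `a` to the free place `σ a`. -/
def BeadMove (σ : α → α) (W W' : Set α) : Prop :=
  ∃ a, a ∈ W ∧ σ a ∉ W ∧ W' = insert (σ a) (W \ {a})

/-- A single bead move, forwards or backwards. -/
def BeadStep (σ : α → α) (W W' : Set α) : Prop :=
  BeadMove σ W W' ∨ BeadMove σ W' W

lemma beadStep_symm (σ : α → α) {W W' : Set α}
    (h : Relation.ReflTransGen (BeadStep σ) W W') : Relation.ReflTransGen (BeadStep σ) W' W :=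
  have : Std.Symm (BeadStep σ) := ⟨fun _ _ h => Or.symm h⟩
  Relation.ReflTransGen.stdSymm.symm _ _ h

/-- A bead can be carried to any free place further along its orbit: if the next place is
occupied, the bead standing there is carried to the target first and then replaced. -/
lemma jump (σ : α → α) (n : ℕ) : ∀ (W : Set α) (a : α), a ∈ W → σ^[n] a ∉ W →
    Relation.ReflTransGen (BeadStep σ) W (insert (σ^[n] a) (W \ {a})) := by
  induction n with
  | zero => intro W a ha hn; exact absurd ha hn
  | succ n ih =>
    intro W a ha hb
    rw [Function.iterate_succ_apply] at hb ⊢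
    generalize hbdef : σ^[n] (σ a) = b at hb ⊢
    by_cases hσ : σ a ∈ W
    · have h1 := ih W (σ a) hσ (hbdef ▸ hb)
      rw [hbdef] at h1
      by_cases hfix : σ a = a
      · rwa [hfix] at h1
      refine h1.tail (Or.inl ⟨a, ?_, ?_, ?_⟩)
      · grind
      · grind
      · ext z
        simp only [Set.mem_insert_iff, Set.mem_sdiff, Set.mem_singleton_iff]
        grind
    · have h0 : BeadStep σ W (insert (σ a) (W \ {a})) := Or.inl ⟨a, ha, hσ, rfl⟩
      by_cases hba : b = σ a
      · rw [hba]
        exact Relation.ReflTransGen.single h0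
      have h1 := ih (insert (σ a) (W \ {a})) (σ a) (Set.mem_insert _ _) (by grind)
      rw [hbdef] at h1
      refine Relation.ReflTransGen.head h0 ?_
      convert h1 using 2
      ext z
      simp only [Set.mem_insert_iff, Set.mem_sdiff, Set.mem_singleton_iff]
      grind

lemma jump_back (σ : α → α) (n : ℕ) (W : Set α) (a b : α) (ha : a ∈ W) (hb : b ∉ W)
    (h : σ^[n] b = a) :
    Relation.ReflTransGen (BeadStep σ) W (insert b (W \ {a})) := by
  have h1 := jump σ n (insert b (W \ {a})) b (Set.mem_insert _ _) (by grind)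
  refine beadStep_symm σ ?_
  convert h1 using 1
  ext z
  simp only [Set.mem_insert_iff, Set.mem_sdiff, Set.mem_singleton_iff]
  grind

end Moves

/-! ### The doubled abacus of a charged bipartition -/

/-- The two beta-sets `X` and `Y` of a charged bipartition, placed on two copies of `ℤ`: the copy
labelled `true` carries `X` and the copy labelled `false` carries `Y`. -/
def abacus (d : ℕ) (w : (PartitionT × PartitionT) × ℤ) : Set (ℤ × Bool) :=
  {z | (z.2 = true ∧ z.1 ∈ betaSet w.1.1.1 w.2) ∨
    (z.2 = false ∧ z.1 ∈ betaSet w.1.2.1 ((d : ℤ) - 1 - w.2))}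

/-- The map along which removing a `d`-cohook moves a bead: `(x, X) ↦ (x, Y) ↦ (x - 2d, X)`. -/
def cohookShift (d : ℕ) (z : ℤ × Bool) : ℤ × Bool :=
  if z.2 then (z.1, false) else (z.1 - 2 * (d : ℤ), true)

@[simp] lemma mem_abacus_true {d : ℕ} {w : (PartitionT × PartitionT) × ℤ} {x : ℤ} :
    (x, true) ∈ abacus d w ↔ x ∈ betaSet w.1.1.1 w.2 := by
  simp [abacus]

@[simp] lemma mem_abacus_false {d : ℕ} {w : (PartitionT × PartitionT) × ℤ} {x : ℤ} :
    (x, false) ∈ abacus d w ↔ x ∈ betaSet w.1.2.1 ((d : ℤ) - 1 - w.2) := by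
  simp [abacus]

@[simp] lemma cohookShift_true (d : ℕ) (x : ℤ) : cohookShift d (x, true) = (x, false) := rfl

@[simp] lemma cohookShift_false (d : ℕ) (x : ℤ) :
    cohookShift d (x, false) = (x - 2 * (d : ℤ), true) := rfl

lemma eq_move_true {d : ℕ} {w w' : (PartitionT × PartitionT) × ℤ} {x y : ℤ} :
    abacus d w' = insert (y, false) (abacus d w \ {(x, true)}) ↔
      betaSet w'.1.1.1 w'.2 = betaSet w.1.1.1 w.2 \ {x} ∧
      betaSet w'.1.2.1 ((d : ℤ) - 1 - w'.2) = insert y (betaSet w.1.2.1 ((d : ℤ) - 1 - w.2)) := by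
  simp only [Set.ext_iff, Prod.forall, Bool.forall_bool, forall_and]
  simp
  exact and_comm

lemma eq_move_false {d : ℕ} {w w' : (PartitionT × PartitionT) × ℤ} {x y : ℤ} :
    abacus d w' = insert (y, true) (abacus d w \ {(x, false)}) ↔
      betaSet w'.1.1.1 w'.2 = insert y (betaSet w.1.1.1 w.2) ∧
      betaSet w'.1.2.1 ((d : ℤ) - 1 - w'.2) = betaSet w.1.2.1 ((d : ℤ) - 1 - w.2) \ {x} := by
  simp only [Set.ext_iff, Prod.forall, Bool.forall_bool, forall_and]
  simp
  exact and_comm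

/-- Removing a `d`-cohook is a bead move along `cohookShift d`; the condition on the new charge
`t'` is automatic, because beta-sets determine charges. -/
lemma removeCohook_iff {d : ℕ} {w w' : (PartitionT × PartitionT) × ℤ} :
    RemoveCohook d w.1.1.1 w.1.2.1 w.2 w'.1.1.1 w'.1.2.1 w'.2 ↔
      BeadMove (cohookShift d) (abacus d w) (abacus d w') := by
  constructor
  · rintro (⟨x, hx, hy, -, h1, h2⟩ | ⟨x, hx, hy, -, h1, h2⟩)
    · refine ⟨(x, true), by simpa, by simpa, ?_⟩
      rw [Set.union_singleton] at h2
      exact eq_move_true.2 ⟨h1, h2⟩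
    · refine ⟨(x, false), by simpa, by simpa, ?_⟩
      rw [Set.union_singleton] at h1
      exact eq_move_false.2 ⟨h1, h2⟩
  · rintro ⟨⟨x, _ | _⟩, hx, hy, h⟩
    · rw [cohookShift_false, mem_abacus_true] at hy
      rw [mem_abacus_false] at hx
      obtain ⟨h1, h2⟩ := eq_move_false.1 h
      obtain ⟨g, hg, he⟩ := exists_insert w.1.1.2 hy
      refine Or.inr ⟨x, hx, hy, ?_, ?_, h2⟩
      · exact (betaSet_inj w'.1.1.2 hg (h1.trans he.symm)).2
      · rw [Set.union_singleton, h1]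
    · rw [cohookShift_true, mem_abacus_false] at hy
      rw [mem_abacus_true] at hx
      obtain ⟨h1, h2⟩ := eq_move_true.1 h
      obtain ⟨g, hg, he⟩ := exists_remove w.1.1.2 hx
      refine Or.inl ⟨x, hx, hy, ?_, h1, ?_⟩
      · exact (betaSet_inj w'.1.1.2 hg (h1.trans he.symm)).2
      · rw [Set.union_singleton, h2]

lemma cohookStep_iff {d : ℕ} {w w' : (PartitionT × PartitionT) × ℤ} :
    CohookStep d w w' ↔ BeadStep (cohookShift d) (abacus d w) (abacus d w') :=
  or_congr removeCohook_iff removeCohook_iff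

/-- A bead may be moved from any occupied place of one copy of `ℤ` to any free place of the other,
and the result is again the abacus of a charged bipartition. -/
lemma exists_move {d : ℕ} (w : (PartitionT × PartitionT) × ℤ) (x y : ℤ) (i : Bool)
    (hx : (x, i) ∈ abacus d w) (hy : (y, !i) ∉ abacus d w) :
    ∃ w', abacus d w' = insert (y, !i) (abacus d w \ {(x, i)}) := by
  cases i
  · simp only [Bool.not_false, mem_abacus_true, mem_abacus_false] at *
    obtain ⟨g, hg, he⟩ := exists_insert w.1.1.2 hy
    obtain ⟨g', hg', he'⟩ := exists_remove w.1.2.2 hx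
    refine ⟨((⟨g, hg⟩, ⟨g', hg'⟩), w.2 + 1), eq_move_false.2 ⟨he, ?_⟩⟩
    rw [← he']
    congr 1
    ring
  · simp only [Bool.not_true, mem_abacus_true, mem_abacus_false] at *
    obtain ⟨g, hg, he⟩ := exists_insert w.1.2.2 hy
    obtain ⟨g', hg', he'⟩ := exists_remove w.1.1.2 hx
    refine ⟨((⟨g', hg'⟩, ⟨g, hg⟩), w.2 - 1), eq_move_true.2 ⟨he', ?_⟩⟩
    rw [← he]
    congr 1
    ring

/-- A bead step out of the abacus of a charged bipartition is realised by a cohook step. -/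
lemma lift_step {d : ℕ} (w : (PartitionT × PartitionT) × ℤ) {V : Set (ℤ × Bool)}
    (h : BeadStep (cohookShift d) (abacus d w) V) :
    ∃ w', abacus d w' = V ∧ CohookStep d w w' := by
  suffices ∃ w', abacus d w' = V by
    obtain ⟨w', rfl⟩ := this
    exact ⟨w', rfl, cohookStep_iff.2 h⟩
  rcases h with ⟨⟨x, i⟩, hx, hy, rfl⟩ | ⟨⟨x, i⟩, hx, hy, h⟩
  · cases i
    · exact exists_move w x _ false hx hy
    · exact exists_move w x _ true hx hy
  -- here the move is undone: the bead at the shifted place goes back to `(x, i)`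
  · have hne : cohookShift d (x, i) ≠ (x, i) := fun he => hy (by rwa [he])
    have hV : V = insert (x, i) (abacus d w \ {cohookShift d (x, i)}) := by
      rw [h]
      ext z
      simp only [Set.mem_insert_iff, Set.mem_sdiff, Set.mem_singleton_iff]
      grind
    have h1 : cohookShift d (x, i) ∈ abacus d w := h ▸ Set.mem_insert _ _
    have h2 : (x, i) ∉ abacus d w := by
      rw [h]
      simp only [Set.mem_insert_iff, Set.mem_sdiff, Set.mem_singleton_iff]
      grind
    rw [hV]
    cases i
    · exact exists_move w _ x true h1 h2
    · exact exists_move w _ x false h1 h2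

lemma lift_path {d : ℕ} (w : (PartitionT × PartitionT) × ℤ) {V : Set (ℤ × Bool)}
    (h : Relation.ReflTransGen (BeadStep (cohookShift d)) (abacus d w) V) :
    ∃ w', abacus d w' = V ∧ CohookConnected d w w' := by
  induction h with
  | refl => exact ⟨w, rfl, .refl⟩
  | tail _ hs ih =>
    obtain ⟨w', rfl, hw'⟩ := ih
    obtain ⟨w'', rfl, hw''⟩ := lift_step w' hs
    exact ⟨w'', rfl, hw'.tail hw''⟩

/-! ### Invariance of the sum of the charge vectors -/

/-- The sum of the two charge vectors of the charged bipartition `w` is `v`. -/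
def HasTotal (d : ℕ) (w : (PartitionT × PartitionT) × ℤ) (v : Fin (2 * d) → ℤ) : Prop :=
  ∃ s r, TauCharge (2 * d) w.1.1.1 w.2 s ∧
    TauCharge (2 * d) w.1.2.1 ((d : ℤ) - 1 - w.2) r ∧ s + r = v

lemma HasTotal.unique {d : ℕ} (hd : 1 ≤ d) {w : (PartitionT × PartitionT) × ℤ}
    {v v' : Fin (2 * d) → ℤ} (h : HasTotal d w v) (h' : HasTotal d w v') : v = v' := by
  obtain ⟨s, r, hs, hr, rfl⟩ := h
  obtain ⟨s', r', hs', hr', rfl⟩ := h'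
  rw [tauCharge_unique (by omega) hs hs', tauCharge_unique (by omega) hr hr']

/-- Both places involved in a bead move lie on runners of the same index, so one charge vector
loses the unit vector which the other gains. -/
lemma HasTotal.move {d : ℕ} (hd : 1 ≤ d) {w w' : (PartitionT × PartitionT) × ℤ}
    {v : Fin (2 * d) → ℤ} (h : HasTotal d w v) {p : Fin (2 * d)} {b b' : ℤ} {i : Bool}
    (hx : (((p : ℕ) : ℤ) + 1 - ((2 * d : ℕ) : ℤ) + ((2 * d : ℕ) : ℤ) * b, i) ∈ abacus d w)
    (hy : (((p : ℕ) : ℤ) + 1 - ((2 * d : ℕ) : ℤ) + ((2 * d : ℕ) : ℤ) * b', !i) ∉ abacus d w)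
    (hw : abacus d w' =
      insert (((p : ℕ) : ℤ) + 1 - ((2 * d : ℕ) : ℤ) + ((2 * d : ℕ) : ℤ) * b', !i)
        (abacus d w \ {(((p : ℕ) : ℤ) + 1 - ((2 * d : ℕ) : ℤ) + ((2 * d : ℕ) : ℤ) * b, i)})) :
    HasTotal d w' v := by
  obtain ⟨s, r, hs, hr, rfl⟩ := h
  have hl : 0 < 2 * d := by omega
  cases i
  · rw [Bool.not_false] at hy hw
    rw [mem_abacus_true] at hy
    rw [mem_abacus_false] at hx
    obtain ⟨h1, h2⟩ := eq_move_false.1 hw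
    exact ⟨_, _, tauCharge_insert hl hs p _ hy h1, tauCharge_remove hl hr p _ hx h2, by abel⟩
  · rw [Bool.not_true] at hy hw
    rw [mem_abacus_false] at hy
    rw [mem_abacus_true] at hx
    obtain ⟨h1, h2⟩ := eq_move_true.1 hw
    exact ⟨_, _, tauCharge_remove hl hs p _ hx h1, tauCharge_insert hl hr p _ hy h2, by abel⟩

lemma exists_shift_slot {d : ℕ} (hd : 1 ≤ d) (x : ℤ) (i : Bool) :
    ∃ (p : Fin (2 * d)) (b b' : ℤ),
      x = ((p : ℕ) : ℤ) + 1 - ((2 * d : ℕ) : ℤ) + ((2 * d : ℕ) : ℤ) * b ∧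
      cohookShift d (x, i) =
        (((p : ℕ) : ℤ) + 1 - ((2 * d : ℕ) : ℤ) + ((2 * d : ℕ) : ℤ) * b', !i) := by
  obtain ⟨p, b, hb⟩ := exists_slot (show 0 < 2 * d by omega) x
  cases i
  · refine ⟨p, b, b - 1, hb, ?_⟩
    rw [cohookShift_false, hb]
    simp only [Bool.not_false, Prod.mk.injEq, and_true]
    push_cast
    ring
  · exact ⟨p, b, b, hb, by rw [cohookShift_true, hb]; rfl⟩

lemma HasTotal.step {d : ℕ} (hd : 1 ≤ d) {w w' : (PartitionT × PartitionT) × ℤ}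
    {v : Fin (2 * d) → ℤ} (h : HasTotal d w v) (hst : CohookStep d w w') : HasTotal d w' v := by
  rcases cohookStep_iff.1 hst with ⟨⟨x, i⟩, hx, hy, hw⟩ | ⟨⟨x, i⟩, hx, hy, hw⟩
  · obtain ⟨p, b, b', rfl, he⟩ := exists_shift_slot hd x i
    rw [he] at hy hw
    exact h.move hd hx hy hw
  · obtain ⟨p, b, b', rfl, he⟩ := exists_shift_slot hd x i
    rw [he] at hy hw
    refine h.move hd (p := p) (b := b') (b' := b) (i := !i) ?_ ?_ ?_
    · rw [hw]
      exact Set.mem_insert _ _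
    · rw [hw, Bool.not_not]
      simp
    · rw [hw, Bool.not_not]
      ext z
      simp only [Set.mem_insert_iff, Set.mem_sdiff, Set.mem_singleton_iff]
      grind

lemma HasTotal.path {d : ℕ} (hd : 1 ≤ d) {w w' : (PartitionT × PartitionT) × ℤ}
    {v : Fin (2 * d) → ℤ} (h : HasTotal d w v) (hst : CohookConnected d w w') :
    HasTotal d w' v := by
  induction hst with
  | refl => exact h
  | tail _ hs ih => exact ih.step hd hs

/-! ### Connecting two charged bipartitions with the same total -/

/-- The `k`-th place of the `cohookShift d`-orbit through the residue class of `ρ` modulo `2d`. -/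
def chain (d : ℕ) (ρ : ℤ) (k : ℤ) : ℤ × Bool :=
  (ρ + 2 * (d : ℤ) * (k / 2), decide (k % 2 = 1))

lemma shift_chain (d : ℕ) (ρ k : ℤ) : cohookShift d (chain d ρ (k + 1)) = chain d ρ k := by
  rcases Int.emod_two_eq_zero_or_one k with h | h
  · have h1 : (k + 1) / 2 = k / 2 := by omega
    have h2 : (k + 1) % 2 = 1 := by omega
    simp [chain, h1, h2, h]
  · have h1 : (k + 1) / 2 = k / 2 + 1 := by omega
    have h2 : (k + 1) % 2 = 0 := by omega
    simp [chain, h1, h2, h]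
    ring

lemma iterate_shift_chain (d : ℕ) (ρ : ℤ) (n : ℕ) : ∀ k : ℤ,
    (cohookShift d)^[n] (chain d ρ (k + n)) = chain d ρ k := by
  induction n with
  | zero => simp
  | succ n ih =>
    intro k
    rw [Function.iterate_succ_apply, Nat.cast_succ, ← add_assoc, shift_chain, ih]

lemma exists_chain (d : ℕ) (ρ b : ℤ) (i : Bool) :
    ∃ k, (ρ + ((2 * d : ℕ) : ℤ) * b, i) = chain d ρ k := by
  cases i
  · exact ⟨2 * b, by simp [chain]⟩
  · refine ⟨2 * b + 1, ?_⟩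
    have h1 : (2 * b + 1) / 2 = b := by omega
    have h2 : (2 * b + 1) % 2 = 1 := by omega
    simp [chain, h1, h2]

lemma jump_same_residue {d : ℕ} (W : Set (ℤ × Bool)) (ρ b b' : ℤ) (i j : Bool)
    (ha : (ρ + ((2 * d : ℕ) : ℤ) * b, i) ∈ W) (hb : (ρ + ((2 * d : ℕ) : ℤ) * b', j) ∉ W) :
    Relation.ReflTransGen (BeadStep (cohookShift d)) W
      (insert (ρ + ((2 * d : ℕ) : ℤ) * b', j) (W \ {(ρ + ((2 * d : ℕ) : ℤ) * b, i)})) := by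
  obtain ⟨k, hk⟩ := exists_chain d ρ b i
  obtain ⟨k', hk'⟩ := exists_chain d ρ b' j
  rw [hk] at ha ⊢
  rw [hk'] at hb ⊢
  rcases le_total k k' with h | h
  · obtain ⟨n, rfl⟩ := Int.le.dest h
    exact jump_back _ n W _ _ ha hb (iterate_shift_chain d ρ n k)
  · obtain ⟨n, rfl⟩ := Int.le.dest h
    have h1 := iterate_shift_chain d ρ n k'
    have := jump (cohookShift d) n W _ ha (by rwa [h1])
    rwa [h1] at this

/-- Nested abaci are equal: passing to the larger one raises neither `t` nor `d - 1 - t`, as their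
sum is fixed. -/
lemma eq_of_abacus_subset {d : ℕ} {w w' : (PartitionT × PartitionT) × ℤ}
    (h : abacus d w ⊆ abacus d w') : w = w' := by
  have hX : betaSet w.1.1.1 w.2 ⊆ betaSet w'.1.1.1 w'.2 := fun x hx =>
    mem_abacus_true.1 (h (mem_abacus_true (d := d).2 hx))
  have hY : betaSet w.1.2.1 ((d : ℤ) - 1 - w.2) ⊆ betaSet w'.1.2.1 ((d : ℤ) - 1 - w'.2) :=
    fun x hx => mem_abacus_false.1 (h (mem_abacus_false.2 hx))
  have h1 := charge_le_of_subset w.1.1.2 w'.1.1.2 hX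
  have h2 := charge_le_of_subset w.1.2.2 w'.1.2.2 hY
  have ht : w.2 = w'.2 := by omega
  rw [ht] at hX hY
  have h3 := (betaSet_inj w.1.1.2 w'.1.1.2 (betaSet_eq_of_subset w.1.1.2 w'.1.1.2 hX)).1
  have h4 := (betaSet_inj w.1.2.2 w'.1.2.2 (betaSet_eq_of_subset w.1.2.2 w'.1.2.2 hY)).1
  exact Prod.ext (Prod.ext (Subtype.ext h3) (Subtype.ext h4)) ht

lemma abacus_diff_finite {d : ℕ} (w w' : (PartitionT × PartitionT) × ℤ) :
    (abacus d w \ abacus d w').Finite := by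
  have h1 := finite_diff w.1.1.2 w'.1.1.2 w.2 w'.2
  have h2 := finite_diff w.1.2.2 w'.1.2.2 ((d : ℤ) - 1 - w.2) ((d : ℤ) - 1 - w'.2)
  refine ((h1.image fun x => (x, true)).union (h2.image fun x => (x, false))).subset ?_
  rintro ⟨x, _ | _⟩ h
  · right
    simpa using h
  · left
    simpa using h

/-- If `w` and `w'` have the same total, a bead of `w` missing from `w'` is matched by a bead of
`w'` missing from `w` in the same residue class; otherwise the runners of `w'` of that index would
be contained in those of `w` and, the charges summing to the same value, coincide with them. -/
lemma exists_partner {d : ℕ} (hd : 1 ≤ d) {w w' : (PartitionT × PartitionT) × ℤ}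
    {v : Fin (2 * d) → ℤ} (h : HasTotal d w v) (h' : HasTotal d w' v) (p : Fin (2 * d)) (b : ℤ)
    (i : Bool)
    (ha : (((p : ℕ) : ℤ) + 1 - ((2 * d : ℕ) : ℤ) + ((2 * d : ℕ) : ℤ) * b, i) ∈ abacus d w)
    (ha' : (((p : ℕ) : ℤ) + 1 - ((2 * d : ℕ) : ℤ) + ((2 * d : ℕ) : ℤ) * b, i) ∉ abacus d w') :
    ∃ (b' : ℤ) (j : Bool),
      (((p : ℕ) : ℤ) + 1 - ((2 * d : ℕ) : ℤ) + ((2 * d : ℕ) : ℤ) * b', j) ∈ abacus d w' ∧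
      (((p : ℕ) : ℤ) + 1 - ((2 * d : ℕ) : ℤ) + ((2 * d : ℕ) : ℤ) * b', j) ∉ abacus d w := by
  by_contra! hcon
  have hl : 0 < 2 * d := by omega
  obtain ⟨s, r, hs, hr, rfl⟩ := h
  obtain ⟨s', r', hs', hr', hv⟩ := h'
  have hvp := congrFun hv p
  simp only [Pi.add_apply] at hvp
  obtain ⟨ν₁, hν₁, e₁⟩ := (tauCharge_iff hl).1 hs p
  obtain ⟨ν₂, hν₂, e₂⟩ := (tauCharge_iff hl).1 hr p
  obtain ⟨ν₃, hν₃, e₃⟩ := (tauCharge_iff hl).1 hs' p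
  obtain ⟨ν₄, hν₄, e₄⟩ := (tauCharge_iff hl).1 hr' p
  have hX : betaSet ν₃ (s' p) ⊆ betaSet ν₁ (s p) := by
    rw [← e₁, ← e₃]
    exact fun b hb => mem_abacus_true.1 (hcon b true (mem_abacus_true.2 hb))
  have hY : betaSet ν₄ (r' p) ⊆ betaSet ν₂ (r p) := by
    rw [← e₂, ← e₄]
    exact fun b hb => mem_abacus_false.1 (hcon b false (mem_abacus_false.2 hb))
  have h1 := charge_le_of_subset hν₃ hν₁ hX
  have h2 := charge_le_of_subset hν₄ hν₂ hY
  have hsp : s' p = s p := by omega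
  have hrp : r' p = r p := by omega
  rw [hsp] at hX e₃
  rw [hrp] at hY e₄
  have hX' := betaSet_eq_of_subset hν₃ hν₁ hX
  have hY' := betaSet_eq_of_subset hν₄ hν₂ hY
  rw [← e₁, ← e₃] at hX'
  rw [← e₂, ← e₄] at hY'
  cases i
  · rw [mem_abacus_false] at ha ha'
    exact ha' (hY'.symm.subset ha)
  · rw [mem_abacus_true] at ha ha'
    exact ha' (hX'.symm.subset ha)

lemma connected_of_total {d : ℕ} (hd : 1 ≤ d) {w' : (PartitionT × PartitionT) × ℤ}
    {v : Fin (2 * d) → ℤ} (h' : HasTotal d w' v) (n : ℕ) :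
    ∀ w, HasTotal d w v → (abacus d w \ abacus d w').ncard = n → CohookConnected d w w' := by
  induction n with
  | zero =>
    intro w _ hn
    rw [Set.ncard_eq_zero (abacus_diff_finite w w'), Set.sdiff_eq_empty] at hn
    rw [eq_of_abacus_subset hn]
    exact .refl
  | succ n ih =>
    intro w h hn
    obtain ⟨⟨x, i⟩, ha, ha'⟩ : (abacus d w \ abacus d w').Nonempty := by
      rw [← Set.ncard_pos (abacus_diff_finite w w')]
      omega
    obtain ⟨p, b, rfl⟩ := exists_slot (show 0 < 2 * d by omega) x
    obtain ⟨b', j, hb', hb⟩ := exists_partner hd h h' p b i ha ha'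
    obtain ⟨w₁, hw₁, hc⟩ := lift_path w (jump_same_residue _ _ b b' i j ha hb)
    refine hc.trans (ih w₁ (h.path hd hc) ?_)
    have hset : abacus d w₁ \ abacus d w' = (abacus d w \ abacus d w') \
        {(((p : ℕ) : ℤ) + 1 - ((2 * d : ℕ) : ℤ) + ((2 * d : ℕ) : ℤ) * b, i)} := by
      rw [hw₁]
      ext z
      simp only [Set.mem_insert_iff, Set.mem_sdiff, Set.mem_singleton_iff]
      grind
    rw [hset, Set.ncard_sdiff_singleton_of_mem (show _ ∈ _ \ _ from ⟨ha, ha'⟩), hn, Nat.add_sub_cancel]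

/-- `(μ, t)` and `(μ', t')` are connected by `d`-cohook moves if and only if
`s + r = s' + r'` in `ℤ^{2d}`. -/
theorem statement5 (d : ℕ) (hd : 1 ≤ d) (m1 m2 n1 n2 : PartitionT) (t t' : ℤ)
    (s r s' r' : Fin (2 * d) → ℤ)
    (hs : TauCharge (2 * d) m1.1 t s) (hr : TauCharge (2 * d) m2.1 ((d : ℤ) - 1 - t) r)
    (hs' : TauCharge (2 * d) n1.1 t' s') (hr' : TauCharge (2 * d) n2.1 ((d : ℤ) - 1 - t') r') :
    CohookConnected d ((m1, m2), t) ((n1, n2), t') ↔ s + r = s' + r' := by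
  have h : HasTotal d ((m1, m2), t) (s + r) := ⟨s, r, hs, hr, rfl⟩
  have h' : HasTotal d ((n1, n2), t') (s' + r') := ⟨s', r', hs', hr', rfl⟩
  constructor
  · exact fun hc => (h.path hd hc).unique hd h'
  · intro he
    rw [← he] at h'
    exact connected_of_total hd h' _ _ h rfl
end

section
/- Fix d >= 1. Let sigma_* : X_d -> X_d be the linear involution with sigma_*(Lambda_i) = Lambda_{-i} and sigma_*(delta) = delta, and for a bipartition mu and t ∈ Z set wt(Theta_t(mu)) := sigma_*^t(wt(mu, t)). If (mu', t') is obtained from (mu, t) by removing a d-cohook, then wt(Theta_t(mu)) = sigma_*(wt(Theta_{t'}(mu'))) - delta/2. -/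
instance instNeZeroTwoMul (d : ℕ) [NeZero d] : NeZero (2 * d) :=
  ⟨Nat.mul_ne_zero two_ne_zero (NeZero.ne d)⟩

/-- `X_d`: the `ℚ`-vector space with basis `{Λ_i : i ∈ ℤ/2d} ∪ {δ}`. -/
abbrev Xspace (d : ℕ) : Type := Option (ZMod (2 * d)) →₀ ℚ

/-- The fundamental weight `Λ_i`. -/
noncomputable def Lam (d : ℕ) (i : ZMod (2 * d)) : Xspace d := Finsupp.single (some i) 1

/-- The basis vector `δ`. -/
noncomputable def deltaX (d : ℕ) : Xspace d := Finsupp.single none 1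

/-- The simple root `α_i = 2Λ_i - Λ_{i-1} - Λ_{i+1} + ε_i δ`, with `ε_i = 1` iff `i = 0`. -/
noncomputable def alphaX (d : ℕ) (i : ZMod (2 * d)) : Xspace d :=
  2 • Lam d i - Lam d (i - 1) - Lam d (i + 1) + (if i = 0 then deltaX d else 0)

/-- `Δ(v, e) = (v̄ (1 - v̄/e) + v (v/e - 1)) / 2` where `v̄ ∈ {0, …, e-1}` and `v̄ ≡ v (mod e)`. -/
noncomputable def DeltaQ (v : ℤ) (e : ℕ) : ℚ :=
  ((Int.emod v e : ℤ) * (1 - ((Int.emod v e : ℤ) : ℚ) / e) + v * ((v : ℚ) / e - 1)) / 2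

/-- The number of boxes of the partition `f` whose `c`-shifted content is `≡ i (mod 2d)`
(boxes are `0`-indexed: `(a, b)` with `b < f a` has shifted content `c + b - a`). -/
noncomputable def nBox (d : ℕ) (f : ℕ → ℕ) (c : ℤ) (i : ZMod (2 * d)) : ℕ :=
  Set.ncard {p : ℕ × ℕ | p.2 < f p.1 ∧ ((c + (p.2 : ℤ) - (p.1 : ℤ) : ℤ) : ZMod (2 * d)) = i}

/-- The weight `wt(μ, t) = Λ_{[t]} + Λ_{[d-1-t]} - ∑_i n_i(μ,t) α_i
- (Δ(t,2d) + Δ(d-1-t,2d) + t/2) δ` of the charged bipartition `(μ¹, μ², t)`. -/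
noncomputable def wt (d : ℕ) [NeZero d] (f g : ℕ → ℕ) (t : ℤ) : Xspace d :=
  Lam d (t : ZMod (2 * d)) + Lam d (((d : ℤ) - 1 - t : ℤ) : ZMod (2 * d))
    - ∑ i : ZMod (2 * d),
        ((nBox d f t i + nBox d g ((d : ℤ) - 1 - t) i : ℕ) : ℚ) • alphaX d i
    - (DeltaQ t (2 * d) + DeltaQ ((d : ℤ) - 1 - t) (2 * d) + (t : ℚ) / 2) • deltaX d

/-- The linear involution `σ_*` of `X_d`, with `σ_*(Λ_i) = Λ_{-i}` and `σ_*(δ) = δ`. -/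
noncomputable def sigmaStar (d : ℕ) : Xspace d ≃ₗ[ℚ] Xspace d :=
  Finsupp.domLCongr (Equiv.optionCongr (Equiv.neg (ZMod (2 * d))))

/-- The weight `wt(Θ_t(μ)) := σ_*^t (wt(μ, t))` of the symbol `Θ_t(μ)`. -/
noncomputable def wtTheta (d : ℕ) [NeZero d] (f g : ℕ → ℕ) (t : ℤ) : Xspace d :=
  (sigmaStar d ^ t) (wt d f g t)

/-! ### Weights of charged partitions and of beads -/

/-- The weight `Λ_c - Δ(c, 2d) δ` of the empty partition of charge `c`. -/
noncomputable def vacuumWt (d : ℕ) (c : ℤ) : Xspace d :=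
  Lam d (c : ZMod (2 * d)) - DeltaQ c (2 * d) • deltaX d

/-- The contribution of a charged partition `(f, c)` to the weight of a charged bipartition. -/
noncomputable def chargedWt (d : ℕ) [NeZero d] (f : ℕ → ℕ) (c : ℤ) : Xspace d :=
  vacuumWt d c - ∑ i : ZMod (2 * d), (nBox d f c i : ℚ) • alphaX d i

/-- The weight `Λ_z - Λ_{z-1} - ⌊(z-1)/2d⌋ δ` of a bead at position `z`. -/
noncomputable def beadWt (d : ℕ) (z : ℤ) : Xspace d :=
  Lam d (z : ZMod (2 * d)) - Lam d ((z - 1 : ℤ) : ZMod (2 * d))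
    - (((z - 1) / ((2 * d : ℕ) : ℤ) : ℤ) : ℚ) • deltaX d

theorem wt_eq_chargedWt (d : ℕ) [NeZero d] (f g : ℕ → ℕ) (t : ℤ) :
    wt d f g t = chargedWt d f t + chargedWt d g ((d : ℤ) - 1 - t)
      - ((t : ℚ) / 2) • deltaX d := by
  simp only [wt, chargedWt, vacuumWt, Nat.cast_add, add_smul, Finset.sum_add_distrib]
  abel

theorem DeltaQ_sub (e : ℕ) (he : 0 < e) (v : ℤ) :
    DeltaQ v e - DeltaQ (v - 1) e = (((v - 1) / (e : ℤ) : ℤ) : ℚ) := by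
  have he' : (0 : ℤ) < e := by exact_mod_cast he
  have hq : (e : ℚ) ≠ 0 := by positivity
  set q := (v - 1) / (e : ℤ) with hqdef
  set r := (v - 1) % (e : ℤ) with hrdef
  have h1 : (e : ℤ) * q + r = v - 1 := Int.mul_ediv_add_emod (v - 1) e
  have h2 : 0 ≤ r := Int.emod_nonneg _ he'.ne'
  have h3 : r < e := Int.emod_lt_of_pos _ he'
  have hv : (v : ℚ) = e * q + r + 1 := by
    have : v = e * q + r + 1 := by omega
    exact_mod_cast this
  have hr : Int.emod (v - 1) (e : ℤ) = r := rfl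
  rcases lt_or_ge (r + 1) (e : ℤ) with h | h
  · have hm : Int.emod v (e : ℤ) = r + 1 :=
      ((Int.ediv_emod_unique he' (q := q)).2 ⟨by omega, by omega, h⟩).2
    simp only [DeltaQ, hm, hr]
    push_cast
    rw [hv]
    field_simp
    ring
  · have hm : Int.emod v (e : ℤ) = 0 :=
      ((Int.ediv_emod_unique he' (q := q + 1)).2 ⟨by linarith, le_rfl, he'⟩).2
    have hre : (r : ℚ) = e - 1 := by
      have : r = e - 1 := by omega
      exact_mod_cast this
    simp only [DeltaQ, hm, hr]
    push_cast
    rw [hv, hre]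
    field_simp
    ring

theorem ediv_sub_ediv_pred (e : ℕ) (he : 0 < e) (z : ℤ) :
    z / (e : ℤ) - (z - 1) / (e : ℤ) = if (z : ZMod e) = 0 then 1 else 0 := by
  have he' : (0 : ℤ) < e := by exact_mod_cast he
  have h1 := Int.mul_ediv_add_emod z e
  have h2 := Int.emod_nonneg z he'.ne'
  have h3 := Int.emod_lt_of_pos z he'
  have hiff : (z : ZMod e) = 0 ↔ z % (e : ℤ) = 0 := by
    rw [ZMod.intCast_zmod_eq_zero_iff_dvd, Int.dvd_iff_emod_eq_zero]
  split_ifs with h <;> rw [hiff] at h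
  · have := ((Int.ediv_emod_unique he' (a := z - 1) (q := z / e - 1) (r := e - 1)).2
      ⟨by linarith, by omega, by omega⟩).1
    omega
  · have := ((Int.ediv_emod_unique he' (a := z - 1) (q := z / e) (r := z % e - 1)).2
      ⟨by linarith, by omega, by omega⟩).1
    omega

theorem vacuumWt_sub (d : ℕ) [NeZero d] (c : ℤ) :
    vacuumWt d c - vacuumWt d (c - 1) = beadWt d c := by
  rw [beadWt, ← DeltaQ_sub (2 * d) (Nat.pos_of_ne_zero (NeZero.ne _)) c, vacuumWt, vacuumWt,
    sub_smul]
  abel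

theorem beadWt_sub_succ (d : ℕ) [NeZero d] (z : ℤ) :
    beadWt d z - beadWt d (z + 1) = alphaX d (z : ZMod (2 * d)) := by
  have h := ediv_sub_ediv_pred (2 * d) (Nat.pos_of_ne_zero (NeZero.ne _)) z
  have hz : z / ((2 * d : ℕ) : ℤ) = (z - 1) / ((2 * d : ℕ) : ℤ)
      + if (z : ZMod (2 * d)) = 0 then 1 else 0 := by omega
  simp only [beadWt, alphaX, add_sub_cancel_right, hz, Int.cast_add, Int.cast_sub, Int.cast_one,
    add_smul, two_smul]
  split_ifs
  · simp only [Int.cast_one, one_smul]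
    abel
  · simp only [Int.cast_zero, zero_smul]
    abel

theorem beadWt_sub_period (d : ℕ) [NeZero d] (z : ℤ) :
    beadWt d (z - 2 * (d : ℤ)) = beadWt d z + deltaX d := by
  have h0 : ((2 * d : ℕ) : ℤ) ≠ 0 := by exact_mod_cast NeZero.ne (2 * d)
  have hc : ((2 : ZMod (2 * d)) * (d : ZMod (2 * d))) = 0 := by
    exact_mod_cast ZMod.natCast_self (2 * d)
  have hdiv : (z - 2 * (d : ℤ) - 1) / ((2 * d : ℕ) : ℤ) = (z - 1) / ((2 * d : ℕ) : ℤ) - 1 := by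
    have : z - 2 * (d : ℤ) - 1 = (z - 1) + (-1) * ((2 * d : ℕ) : ℤ) := by push_cast; ring
    rw [this, Int.add_mul_ediv_right _ _ h0]
    ring
  simp only [beadWt, hdiv, Int.cast_sub, Int.cast_mul, Int.cast_ofNat, Int.cast_natCast, hc,
    sub_zero, Int.cast_one, sub_smul, one_smul]
  abel

/-! ### Additivity over the beads of the beta-set -/

theorem nBox_eq_sum (d : ℕ) (f : ℕ → ℕ) (c : ℤ) (N : ℕ)
    (hN : ∀ i, N ≤ i → f i = 0) (i : ZMod (2 * d)) :
    nBox d f c i = ∑ a ∈ Finset.range N, ∑ b ∈ Finset.range (f a),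
      if ((c + (b : ℤ) - (a : ℤ) : ℤ) : ZMod (2 * d)) = i then 1 else 0 := by
  have hset : {p : ℕ × ℕ | p.2 < f p.1 ∧
      ((c + (p.2 : ℤ) - (p.1 : ℤ) : ℤ) : ZMod (2 * d)) = i} =
      ↑((((Finset.range N).sigma fun a => Finset.range (f a)).map
        (Equiv.sigmaEquivProd ℕ ℕ).toEmbedding).filter
          fun p => ((c + (p.2 : ℤ) - (p.1 : ℤ) : ℤ) : ZMod (2 * d)) = i) := by
    ext ⟨a, b⟩
    simp only [Set.mem_ofPred_eq, Finset.coe_filter, Finset.mem_map_equiv, Finset.mem_sigma,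
      Finset.mem_range, Equiv.sigmaEquivProd_symm_apply]
    refine and_congr_left fun _ => ⟨fun h => ⟨?_, h⟩, fun h => h.2⟩
    by_contra hh
    have := hN a (not_lt.1 hh)
    omega
  rw [nBox, hset, Set.ncard_coe_finset, Finset.card_filter, Finset.sum_map, Finset.sum_sigma]
  rfl

theorem sum_nBox_smul (d : ℕ) [NeZero d] (f : ℕ → ℕ) (c : ℤ) (N : ℕ)
    (hN : ∀ i, N ≤ i → f i = 0) :
    ∑ i : ZMod (2 * d), (nBox d f c i : ℚ) • alphaX d i =
      ∑ a ∈ Finset.range N, ∑ b ∈ Finset.range (f a),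
        alphaX d ((c + (b : ℤ) - (a : ℤ) : ℤ) : ZMod (2 * d)) := by
  simp only [nBox_eq_sum d f c N hN, Nat.cast_sum, Finset.sum_smul]
  rw [Finset.sum_comm]
  refine Finset.sum_congr rfl fun a _ => ?_
  rw [Finset.sum_comm]
  refine Finset.sum_congr rfl fun b _ => ?_
  simp

/-- Sliding a bead from `c - a` to `k + c - a` accounts for the roots of a row of `k` boxes. -/
theorem sum_row (d : ℕ) [NeZero d] (c : ℤ) (a k : ℕ) :
    ∑ b ∈ Finset.range k, alphaX d ((c + (b : ℤ) - (a : ℤ) : ℤ) : ZMod (2 * d)) =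
      beadWt d (c - a) - beadWt d (k + c - a) := by
  induction k with
  | zero => simp
  | succ k ih =>
    rw [Finset.sum_range_succ, ih, ← beadWt_sub_succ]
    have h1 : c + (k : ℤ) - a = k + c - a := by ring
    have h2 : (k : ℤ) + c - a + 1 = ((k + 1 : ℕ) : ℤ) + c - a := by push_cast; ring
    rw [h1, h2]
    abel

theorem sum_vacuum (d : ℕ) [NeZero d] (c : ℤ) (N : ℕ) :
    ∑ a ∈ Finset.range N, beadWt d (c - a) = vacuumWt d c - vacuumWt d (c - N) := by
  induction N with
  | zero => simp
  | succ N ih =>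
    rw [Finset.sum_range_succ, ih, ← vacuumWt_sub]
    have h1 : c - (N : ℤ) - 1 = c - ((N + 1 : ℕ) : ℤ) := by push_cast; ring
    rw [h1]
    abel

theorem chargedWt_eq_sum (d : ℕ) [NeZero d] (f : ℕ → ℕ) (c : ℤ) (N : ℕ)
    (hN : ∀ i, N ≤ i → f i = 0) :
    chargedWt d f c = vacuumWt d (c - N) + ∑ a ∈ Finset.range N, beadWt d (f a + c - a) := by
  rw [chargedWt, sum_nBox_smul d f c N hN]
  simp only [sum_row, Finset.sum_sub_distrib, sum_vacuum]
  abel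

/-- Additivity over beads: below any sufficiently small `K` the beta-set looks like that of an empty
partition, and the beads above `K` contribute their individual weights. -/
theorem chargedWt_eq_beads (d : ℕ) [NeZero d] (f : ℕ → ℕ) (hf : IsPartition f) (c : ℤ) :
    ∃ K₀ : ℤ, ∀ K ≤ K₀, ∃ S : Finset ℤ, (∀ z, z ∈ S ↔ z ∈ betaSet f c ∧ K < z) ∧
      chargedWt d f c = vacuumWt d K + ∑ z ∈ S, beadWt d z := by
  obtain ⟨hanti, N₀, hN₀⟩ := hf
  refine ⟨c - N₀, fun K hK => ?_⟩
  obtain ⟨N, hN⟩ : ∃ N : ℕ, c - K = N := Int.eq_ofNat_of_zero_le (by omega)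
  obtain rfl : K = c - N := by omega
  have hNN : ∀ i, N ≤ i → f i = 0 := fun i hi => hN₀ i (by omega)
  refine ⟨(Finset.range N).image fun a : ℕ => (f a : ℤ) + c - a, fun z => ?_, ?_⟩
  · simp only [Finset.mem_image, Finset.mem_range, betaSet, Set.mem_ofPred_eq]
    constructor
    · rintro ⟨a, ha, rfl⟩
      exact ⟨⟨a, rfl⟩, by omega⟩
    · rintro ⟨⟨a, rfl⟩, h⟩
      refine ⟨a, ?_, rfl⟩
      by_contra ha
      have := hNN a (not_lt.1 ha)
      omega
  · rw [Finset.sum_image, chargedWt_eq_sum d f c N hNN]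
    intro a _ b _ hab
    have hab' : (f a : ℤ) + c - a = f b + c - b := hab
    rcases lt_trichotomy a b with h | h | h
    · have := hanti h.le
      omega
    · exact h
    · have := hanti h.le
      omega

theorem chargedWt_insert (d : ℕ) [NeZero d] (f g : ℕ → ℕ) (hf : IsPartition f)
    (hg : IsPartition g) (c c' x : ℤ) (hx : x ∉ betaSet f c)
    (h : betaSet g c' = insert x (betaSet f c)) :
    chargedWt d g c' = chargedWt d f c + beadWt d x := by
  obtain ⟨K₁, h₁⟩ := chargedWt_eq_beads d f hf c
  obtain ⟨K₂, h₂⟩ := chargedWt_eq_beads d g hg c'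
  obtain ⟨K, hK₁, hK₂, hKx⟩ : ∃ K, K ≤ K₁ ∧ K ≤ K₂ ∧ K < x :=
    ⟨min (min K₁ K₂) (x - 1), by omega, by omega, by omega⟩
  obtain ⟨S, hS, hSw⟩ := h₁ K hK₁
  obtain ⟨T, hT, hTw⟩ := h₂ K hK₂
  have hxS : x ∉ S := fun hh => hx ((hS x).1 hh).1
  have hTS : T = insert x S := by
    ext z
    rw [hT, h, Finset.mem_insert, hS, Set.mem_insert_iff]
    constructor
    · tauto
    · rintro (rfl | hz)
      · exact ⟨Or.inl rfl, hKx⟩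
      · exact ⟨Or.inr hz.1, hz.2⟩
  rw [hTw, hSw, hTS, Finset.sum_insert hxS]
  abel

/-! ### Removal of a cohook -/

theorem wt_removeCohook (d : ℕ) [NeZero d] (m1 m2 n1 n2 : ℕ → ℕ)
    (hm1 : IsPartition m1) (hm2 : IsPartition m2)
    (hn1 : IsPartition n1) (hn2 : IsPartition n2) (t t' : ℤ)
    (h : RemoveCohook d m1 m2 t n1 n2 t') :
    wt d m1 m2 t = wt d n1 n2 t' - (1 / 2 : ℚ) • deltaX d := by
  rw [wt_eq_chargedWt, wt_eq_chargedWt]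
  rcases h with ⟨x, hx, hxY, rfl, hX, hY⟩ | ⟨y, hy, hyX, rfl, hX, hY⟩
  · rw [chargedWt_insert d n1 m1 hn1 hm1 (t - 1) t x (by simp [hX])
        (by rw [hX, Set.insert_sdiff_singleton, Set.insert_eq_of_mem hx]),
      chargedWt_insert d m2 n2 hm2 hn2 _ _ x hxY (by rw [hY, Set.union_singleton])]
    push_cast
    module
  · rw [chargedWt_insert d m1 n1 hm1 hn1 t (t + 1) _ hyX (by rw [hX, Set.union_singleton]),
      chargedWt_insert d n2 m2 hn2 hm2 ((d : ℤ) - 1 - (t + 1)) _ y (by simp [hY])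
        (by rw [hY, Set.insert_sdiff_singleton, Set.insert_eq_of_mem hy]),
      beadWt_sub_period]
    push_cast
    module

theorem sigmaStar_deltaX (d : ℕ) : sigmaStar d (deltaX d) = deltaX d := by
  simp [sigmaStar, deltaX]

theorem sigmaStar_mul_self (d : ℕ) : sigmaStar d * sigmaStar d = 1 := by
  ext v i
  rcases i with _ | i <;>
    simp [sigmaStar, Finsupp.domLCongr_apply, ← Equiv.optionCongr_symm]

theorem sigmaStar_zpow_deltaX (d : ℕ) (t : ℤ) : (sigmaStar d ^ t) (deltaX d) = deltaX d := by
  have h2 : sigmaStar d ^ (2 : ℤ) = 1 := by rw [zpow_two, sigmaStar_mul_self]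
  rcases Int.even_or_odd' t with ⟨k, rfl | rfl⟩
  · rw [zpow_mul, h2, one_zpow]
    rfl
  · rw [zpow_add_one, zpow_mul, h2, one_zpow, one_mul, sigmaStar_deltaX]

/-- if `(μ', t')` is obtained from `(μ, t)` by removing a `d`-cohook, then
`wt(Θ_t(μ)) = σ_*(wt(Θ_{t'}(μ'))) - δ/2`. -/
theorem statement7 (d : ℕ) [NeZero d] (m1 m2 n1 n2 : ℕ → ℕ)
    (hm1 : IsPartition m1) (hm2 : IsPartition m2)
    (hn1 : IsPartition n1) (hn2 : IsPartition n2) (t t' : ℤ)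
    (h : RemoveCohook d m1 m2 t n1 n2 t') :
    wtTheta d m1 m2 t = sigmaStar d (wtTheta d n1 n2 t') - (1 / 2 : ℚ) • deltaX d := by
  have hpow : sigmaStar d ^ t = sigmaStar d * sigmaStar d ^ t' := by
    rcases h with ⟨_, _, _, rfl, _⟩ | ⟨_, _, _, rfl, _⟩
    · rw [← zpow_one_add]
      congr 1
      ring
    · rw [add_comm t 1, zpow_one_add, ← mul_assoc, sigmaStar_mul_self, one_mul]
  rw [wtTheta, wtTheta, wt_removeCohook d m1 m2 n1 n2 hm1 hm2 hn1 hn2 t t' h, map_sub, map_smul,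
    sigmaStar_zpow_deltaX, hpow]
  rfl
end
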